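/- arXiv:1610.04800 — 6 statements merged into one kernel-verified Lean document; each statement's English description precedes it below -/
import Mathlib

section
/- For any topological space X, the following are equivalent: (i) X is selectively separable, i.e., for every sequence (D_n)_{n<ω} of dense subsets of X there exist finite sets E_n ⊆ D_n such that ⋃_{n<ω} E_n is dense in X; (ii) X is separable and has countable dense fan tightness at every point x ∈ X; (iii) X has a countable dense subset D such that X has countable dense fan tightness at every point x ∈ D. -/
open TopologicalSpace Cardinal

/-- Player II has a winning (perfect-information) strategy in the selection game
`G_fin(𝒜, ℬ)`: during round `n`, Player I plays `A n ∈ 𝒜` and II responds with a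
finite subset of `A n` depending on `⟨A 0, …, A n⟩`; II wins iff the union of
its selections lies in `ℬ`. -/
def WinStratFin {X : Type*} (𝒜 ℬ : Set (Set X)) : Prop :=
  ∃ σ : (n : ℕ) → (Fin (n + 1) → Set X) → Set X,
    (∀ (n : ℕ) (s : Fin (n + 1) → Set X), (∀ i, s i ∈ 𝒜) →
      (σ n s).Finite ∧ σ n s ⊆ s (Fin.last n)) ∧
    ∀ A : ℕ → Set X, (∀ n, A n ∈ 𝒜) →
      (⋃ n : ℕ, σ n (fun i => A i)) ∈ ℬ

/-- Player II has a winning Markov strategy in `G_fin(𝒜, ℬ)`: its finite selection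
from `A n` depends only on `A n` and the round number `n`. -/
def WinMarkovFin {X : Type*} (𝒜 ℬ : Set (Set X)) : Prop :=
  ∃ σ : Set X → ℕ → Set X,
    (∀ A ∈ 𝒜, ∀ n : ℕ, (σ A n).Finite ∧ σ A n ⊆ A) ∧
    ∀ A : ℕ → Set X, (∀ n, A n ∈ 𝒜) → (⋃ n : ℕ, σ (A n) n) ∈ ℬ

/-- Player II has a winning (perfect-information) strategy in the strong selection
game `G_1(𝒜, ℬ)`: during round `n`, Player I plays `A n ∈ 𝒜` and II responds with a
single element of `A n` depending on `⟨A 0, …, A n⟩`; II wins iff the set of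
its selections lies in `ℬ`. -/
def WinStratOne {X : Type*} (𝒜 ℬ : Set (Set X)) : Prop :=
  ∃ σ : (n : ℕ) → (Fin (n + 1) → Set X) → X,
    (∀ (n : ℕ) (s : Fin (n + 1) → Set X), (∀ i, s i ∈ 𝒜) →
      σ n s ∈ s (Fin.last n)) ∧
    ∀ A : ℕ → Set X, (∀ n, A n ∈ 𝒜) →
      {x | ∃ n : ℕ, x = σ n (fun i => A i)} ∈ ℬ

/-- Player II has a winning Markov strategy in `G_1(𝒜, ℬ)`. -/
def WinMarkovOne {X : Type*} (𝒜 ℬ : Set (Set X)) : Prop :=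
  ∃ σ : Set X → ℕ → X,
    (∀ A ∈ 𝒜, ∀ n : ℕ, σ A n ∈ A) ∧
    ∀ A : ℕ → Set X, (∀ n, A n ∈ 𝒜) → {x | ∃ n : ℕ, x = σ (A n) n} ∈ ℬ

/-- `𝒟_X`: the collection of dense subsets of `X`. -/
def denseFamily (X : Type*) [TopologicalSpace X] : Set (Set X) := {D | Dense D}

/-- `ℬ_{X,x}`: the collection of subsets of `X` having `x` in their closure. -/
def blades (X : Type*) [TopologicalSpace X] (x : X) : Set (Set X) :=
  {A | x ∈ closure A}

/-- An ω-cover of `X`: an open cover such that every finite subset of `X` is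
contained in some member. -/
def IsOmegaCover {X : Type*} [TopologicalSpace X] (𝒰 : Set (Set X)) : Prop :=
  (∀ U ∈ 𝒰, IsOpen U) ∧ (⋃₀ 𝒰 = Set.univ) ∧
    ∀ F : Set X, F.Finite → ∃ U ∈ 𝒰, F ⊆ U

/-- `Ω_X`: the collection of ω-covers of `X`. -/
def omegaCovers (X : Type*) [TopologicalSpace X] : Set (Set (Set X)) :=
  {𝒰 | IsOmegaCover 𝒰}

/-- `𝒪_X`: the collection of open covers of `X`. -/
def openCovers (X : Type*) [TopologicalSpace X] : Set (Set (Set X)) :=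
  {𝒰 | (∀ U ∈ 𝒰, IsOpen U) ∧ ⋃₀ 𝒰 = Set.univ}

/-- `C_p(X)`: continuous real-valued functions on `X` with the topology of
pointwise convergence (subspace of the product `ℝ^X`). -/
abbrev Cp (X : Type*) [TopologicalSpace X] : Type _ := {f : X → ℝ // Continuous f}

/-- Countable fan tightness of `Y` at `y`. -/
def CFTat (Y : Type*) [TopologicalSpace Y] (y : Y) : Prop :=
  ∀ A : ℕ → Set Y, (∀ n, y ∈ closure (A n)) →
    ∃ B : ℕ → Set Y, (∀ n, (B n).Finite ∧ B n ⊆ A n) ∧ y ∈ closure (⋃ n, B n)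

/-- Countable dense fan tightness of `Y` at `y`. -/
def CDFTat (Y : Type*) [TopologicalSpace Y] (y : Y) : Prop :=
  ∀ A : ℕ → Set Y, (∀ n, Dense (A n)) →
    ∃ B : ℕ → Set Y, (∀ n, (B n).Finite ∧ B n ⊆ A n) ∧ y ∈ closure (⋃ n, B n)

/-- Selective separability of `X`. -/
def SelSep (X : Type*) [TopologicalSpace X] : Prop :=
  ∀ D : ℕ → Set X, (∀ n, Dense (D n)) →
    ∃ E : ℕ → Set X, (∀ n, (E n).Finite ∧ E n ⊆ D n) ∧ Dense (⋃ n, E n)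

/-- The Ω-Menger selection principle `S_fin(Ω_X, Ω_X)`. -/
def OmegaMenger (X : Type*) [TopologicalSpace X] : Prop :=
  ∀ 𝒰 : ℕ → Set (Set X), (∀ n, 𝒰 n ∈ omegaCovers X) →
    ∃ ℱ : ℕ → Set (Set X), (∀ n, (ℱ n).Finite ∧ ℱ n ⊆ 𝒰 n) ∧
      (⋃ n, ℱ n) ∈ omegaCovers X

/-- The one-point Lindelöfication topology on `Option α`: sets not containing
`none` (the point `∞`) are open, and a set containing `∞` is open iff its
complement is countable. -/
def lindTop (α : Type*) : TopologicalSpace (Option α) where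
  IsOpen S := none ∈ S → Sᶜ.Countable
  isOpen_univ := by simp
  isOpen_inter := by
    intro s t hs ht hmem
    rw [Set.compl_inter]
    exact (hs hmem.1).union (ht hmem.2)
  isOpen_sUnion := by
    intro S hS hmem
    obtain ⟨s, hsS, hns⟩ := hmem
    exact ((hS s hsS hns).mono
      (Set.compl_subset_compl.mpr (Set.subset_sUnion_of_mem hsS)))

section SelectionPrinciple

/-- The selection principle `S_fin(𝒜, ℬ)`: for every sequence of members of `𝒜` one can choose a
finite subset of each so that the union of the choices lies in `ℬ`. Selective separability and
countable dense fan tightness are the cases where `𝒜` consists of the dense sets. -/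
def SelFin {X : Type*} (𝒜 ℬ : Set (Set X)) : Prop :=
  ∀ A : ℕ → Set X, (∀ n, A n ∈ 𝒜) →
    ∃ B : ℕ → Set X, (∀ n, (B n).Finite ∧ B n ⊆ A n) ∧ (⋃ n, B n) ∈ ℬ

variable {X : Type*} {𝒜 : Set (Set X)}

theorem SelFin.mono_right {ℬ 𝒞 : Set (Set X)} (h : SelFin 𝒜 ℬ) (hℬ𝒞 : ℬ ⊆ 𝒞) : SelFin 𝒜 𝒞 := by
  intro A hA
  obtain ⟨B, hBA, hB⟩ := h A hA
  exact ⟨B, hBA, hℬ𝒞 hB⟩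

theorem SelFin.exists_countable_mem {ℬ : Set (Set X)} (h : SelFin 𝒜 ℬ) (h𝒜 : 𝒜.Nonempty) :
    ∃ B ∈ ℬ, B.Countable := by
  obtain ⟨A, hA⟩ := h𝒜
  obtain ⟨B, hBA, hB⟩ := h (fun _ => A) (fun _ => hA)
  exact ⟨⋃ n, B n, hB, Set.countable_iUnion fun n => (hBA n).1.countable⟩

/-- Along an enumeration `f` of `ι`, the rounds `Nat.pair k m`, `m : ℕ`, are devoted to `ℬ (f k)`;
the choices made in the other rounds do no harm since `ℬ (f k)` is upward closed. -/
theorem SelFin.iInter {ι : Type*} [Countable ι] {ℬ : ι → Set (Set X)}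
    (hℬ : ∀ i, IsUpperSet (ℬ i)) (h : ∀ i, SelFin 𝒜 (ℬ i)) : SelFin 𝒜 (⋂ i, ℬ i) := by
  intro A hA
  cases isEmpty_or_nonempty ι with
  | inl _ =>
    exact ⟨fun _ => ∅, fun _ => ⟨Set.finite_empty, Set.empty_subset _⟩,
      Set.mem_iInter.2 isEmptyElim⟩
  | inr _ =>
    obtain ⟨f, hf⟩ := exists_surjective_nat ι
    choose B hBA hB using fun k => h (f k) (fun m => A (Nat.pair k m)) (fun _ => hA _)
    refine ⟨fun n => B n.unpair.1 n.unpair.2, fun n => ?_,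
      Set.mem_iInter.2 <| hf.forall.2 fun k => ?_⟩
    · simpa only [Nat.pair_unpair] using hBA n.unpair.1 n.unpair.2
    · have row_subset : ⋃ m, B k m ⊆ ⋃ n : ℕ, B n.unpair.1 n.unpair.2 :=
        Set.iUnion_subset fun m => by
          simpa only [Nat.unpair_pair] using
            Set.subset_iUnion (fun n : ℕ => B n.unpair.1 n.unpair.2) (Nat.pair k m)
      exact hℬ (f k) row_subset (hB k)

end SelectionPrinciple

section DenseSets

variable {X : Type*} [TopologicalSpace X]

theorem isUpperSet_blades (x : X) : IsUpperSet (blades X x) :=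
  fun _ _ hAB hx => closure_mono hAB hx

theorem denseFamily_eq_iInter_blades {D : Set X} (hD : Dense D) :
    denseFamily X = ⋂ x : D, blades X x := by
  ext A
  simp only [Set.mem_iInter]
  exact ⟨fun hA x => hA x,
    fun hA => dense_closure.1 (hD.mono fun x hx => hA ⟨x, hx⟩)⟩

theorem selSep_iff_selFin : SelSep X ↔ SelFin (denseFamily X) (denseFamily X) :=
  Iff.rfl

theorem cdftat_iff_selFin {x : X} : CDFTat X x ↔ SelFin (denseFamily X) (blades X x) :=
  Iff.rfl

theorem SelSep.separableSpace (h : SelSep X) : SeparableSpace X := by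
  obtain ⟨D, hD, hDc⟩ := (selSep_iff_selFin.1 h).exists_countable_mem ⟨Set.univ, dense_univ⟩
  exact ⟨D, hDc, hD⟩

theorem SelSep.cdftat (h : SelSep X) (x : X) : CDFTat X x :=
  cdftat_iff_selFin.2 <| (selSep_iff_selFin.1 h).mono_right fun _ hA => hA x

theorem selSep_of_forall_mem_cdftat {D : Set X} (hDc : D.Countable) (hD : Dense D)
    (h : ∀ x ∈ D, CDFTat X x) : SelSep X := by
  have := hDc.to_subtype
  have all_blades : SelFin (denseFamily X) (⋂ x : D, blades X x) :=
    SelFin.iInter (fun x => isUpperSet_blades x.1) fun x => cdftat_iff_selFin.1 (h x x.2)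
  rwa [← denseFamily_eq_iInter_blades hD, ← selSep_iff_selFin] at all_blades

end DenseSets

/-- For any topological space `X`, TFAE: (i) `X` is selectively
separable; (ii) `X` is separable and has countable dense fan tightness at every
point; (iii) `X` has a countable dense subset `D` with countable dense fan
tightness at every point of `D`. -/
theorem statement0 (X : Type*) [TopologicalSpace X] :
    List.TFAE [SelSep X,
      SeparableSpace X ∧ ∀ x : X, CDFTat X x,
      ∃ D : Set X, D.Countable ∧ Dense D ∧ ∀ x ∈ D, CDFTat X x] := by
  tfae_have 1 → 2 := fun h => ⟨h.separableSpace, h.cdftat⟩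
  tfae_have 2 → 3 := by
    rintro ⟨_, h⟩
    obtain ⟨D, hDc, hD⟩ := exists_countable_dense X
    exact ⟨D, hDc, hD, fun x _ => h x⟩
  tfae_have 3 → 1 := fun ⟨_, hDc, hD, h⟩ => selSep_of_forall_mem_cdftat hDc hD h
  tfae_finish
end

section
/- For any topological space X, the following are equivalent: (i) Player II has a winning Markov strategy in the selective separability game G_fin(𝒟_X, 𝒟_X); (ii) X is separable and for every x ∈ X Player II has a winning Markov strategy in the countable dense fan tightness game G_fin(𝒟_X, ℬ_{X,x}); (iii) X has a countable dense subset D such that for every x ∈ D Player II has a winning Markov strategy in G_fin(𝒟_X, ℬ_{X,x}). -/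
open TopologicalSpace Cardinal

/-! A set is dense as soon as its closure contains every point of one fixed dense set `D`, so when
`D` is countable II only has to play countably many Markov strategies at once. Coding `D × ℕ` into
the round numbers gives each strategy its own infinite sequence of rounds, and this is compatible
with Markov play because the code of a round depends on nothing but its number. -/

namespace WinMarkovFin

variable {X : Type*} {𝒜 ℬ 𝒞 : Set (Set X)}

theorem mono_right (hℬ𝒞 : ℬ ⊆ 𝒞) (h : WinMarkovFin 𝒜 ℬ) : WinMarkovFin 𝒜 𝒞 :=
  let ⟨σ, hσ, hwin⟩ := h
  ⟨σ, hσ, fun A hA => hℬ𝒞 (hwin A hA)⟩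

theorem exists_countable_mem (h𝒜 : 𝒜.Nonempty) (h : WinMarkovFin 𝒜 ℬ) :
    ∃ B ∈ ℬ, B.Countable := by
  obtain ⟨A, hA⟩ := h𝒜
  obtain ⟨σ, hσ, hwin⟩ := h
  exact ⟨⋃ n, σ A n, hwin (fun _ => A) fun _ => hA,
    Set.countable_iUnion fun n => (hσ A hA n).1.countable⟩

theorem iInter {ι : Type*} [Countable ι] {ℬ : ι → Set (Set X)} (hℬ : ∀ i, IsUpperSet (ℬ i))
    (h : ∀ i, WinMarkovFin 𝒜 (ℬ i)) : WinMarkovFin 𝒜 (⋂ i, ℬ i) := by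
  choose σ hσ hwin using h
  have := Encodable.ofCountable ι
  let τ (A : Set X) (n : ℕ) : Set X :=
    (Encodable.decode (α := ι × ℕ) n).elim ∅ fun p => σ p.1 A p.2
  have τ_encode (A : Set X) (p : ι × ℕ) : τ A (Encodable.encode p) = σ p.1 A p.2 := by
    simp only [τ, Encodable.encodek, Option.elim_some]
  refine ⟨τ, fun A hA n => ?_, fun A hA => Set.mem_iInter.2 fun i => ?_⟩
  · cases hn : Encodable.decode (α := ι × ℕ) n with
    | none => simp only [τ, hn, Option.elim_none, Set.finite_empty, Set.empty_subset, and_self]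
    | some p => simpa only [τ, hn, Option.elim_some] using hσ p.1 A hA p.2
  · let code (k : ℕ) : ℕ := Encodable.encode (i, k)
    have selections_subset : ⋃ k, σ i (A (code k)) k ⊆ ⋃ n, τ (A n) n :=
      Set.iUnion_subset fun k => calc
        σ i (A (code k)) k = τ (A (code k)) (code k) := (τ_encode (A (code k)) (i, k)).symm
        _ ⊆ ⋃ n, τ (A n) n := Set.subset_iUnion (fun n => τ (A n) n) (code k)
    exact hℬ i selections_subset (hwin i (fun k => A (code k)) fun k => hA (code k))

end WinMarkovFin

section Blades

variable {X : Type*} [TopologicalSpace X]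

theorem denseFamily_subset_blades (x : X) : denseFamily X ⊆ blades X x :=
  fun _ hA => hA x

theorem iInter_blades_subset_denseFamily {D : Set X} (hD : Dense D) :
    ⋂ x : D, blades X (x : X) ⊆ denseFamily X :=
  fun _ hA => dense_closure.1 (hD.mono fun x hx => Set.mem_iInter.1 hA ⟨x, hx⟩)

end Blades

theorem statement2_general {X : Type*} [TopologicalSpace X] {𝒜 : Set (Set X)}
    (h𝒜 : 𝒜.Nonempty) :
    List.TFAE [WinMarkovFin 𝒜 (denseFamily X),
      SeparableSpace X ∧ ∀ x : X, WinMarkovFin 𝒜 (blades X x),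
      ∃ D : Set X, D.Countable ∧ Dense D ∧ ∀ x ∈ D, WinMarkovFin 𝒜 (blades X x)] := by
  tfae_have 1 → 2 := fun h =>
    have ⟨D, hdense, hcount⟩ := h.exists_countable_mem h𝒜
    ⟨⟨D, hcount, hdense⟩, fun x => h.mono_right (denseFamily_subset_blades x)⟩
  tfae_have 2 → 3 := fun ⟨⟨D, hcount, hdense⟩, h⟩ => ⟨D, hcount, hdense, fun x _ => h x⟩
  tfae_have 3 → 1 := fun ⟨D, hcount, hdense, h⟩ =>
    have := hcount.to_subtype
    (WinMarkovFin.iInter (fun x : D => isUpperSet_blades (x : X)) fun x => h x x.2).mono_right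
      (iInter_blades_subset_denseFamily hdense)
  tfae_finish

/-- the Markov-strategy analogue of Statement 1. -/
theorem statement2 (X : Type*) [TopologicalSpace X] :
    List.TFAE [WinMarkovFin (denseFamily X) (denseFamily X),
      SeparableSpace X ∧ ∀ x : X, WinMarkovFin (denseFamily X) (blades X x),
      ∃ D : Set X, D.Countable ∧ Dense D ∧
        ∀ x ∈ D, WinMarkovFin (denseFamily X) (blades X x)] :=
  statement2_general ⟨Set.univ, dense_univ⟩
end

section
/- For any completely regular Hausdorff (Tychonoff) topological space X, the following are equivalent: (i) X is Ω-Menger, i.e., for every sequence (𝒰_n)_{n<ω} of ω-covers of X there exist finite ℱ_n ⊆ 𝒰_n with ⋃_{n<ω} ℱ_n an ω-cover of X; (ii) C_p(X) has countable fan tightness at every point; (iii) C_p(X) has countable dense fan tightness at every point. -/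
open TopologicalSpace Cardinal

/-!
A family `A` of continuous functions has `f` in its pointwise closure iff for every `ε > 0` the open
sets `{x | |g x - f x| < ε}`, `g ∈ A`, form an ω-cover. Selections from ω-covers therefore become
selections from sets accumulating at `f`, once the selected ω-cover is arranged to have all its
tails ω-covers, so that `ε` can shrink along the sequence. Conversely, complete regularity makes the
functions that agree with `f + 1` off some member of a given ω-cover dense, and such a function can
be `1`-close to `f` only inside that member.
-/

section OmegaCovers

open scoped Topology

lemma hasBasis_nhds_pi_ball {ι : Type*} {E : ι → Type*} [∀ i, PseudoMetricSpace (E i)]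
    (f : ∀ i, E i) :
    (𝓝 f).HasBasis (fun p : Set ι × ℝ => p.1.Finite ∧ 0 < p.2)
      fun p => p.1.pi fun i => Metric.ball (f i) p.2 := by
  rw [nhds_pi]
  refine Filter.hasBasis_pi_same_index (fun _ => Metric.nhds_basis_ball) fun I r hI hr => ?_
  have hle : ∀ᶠ ε in 𝓝[>] (0 : ℝ), ∀ i ∈ I, ε ≤ r i :=
    (Filter.eventually_all_finite hI).2 fun i hi =>
      (eventually_le_nhds (hr i hi)).filter_mono nhdsWithin_le_nhds
  obtain ⟨ε, hεr, hε⟩ := (hle.and self_mem_nhdsWithin).exists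
  exact ⟨ε, hε, fun i hi => Metric.ball_subset_ball (hεr i hi)⟩

variable {X : Type*} [TopologicalSpace X]

lemma isOmegaCover_iff {𝒰 : Set (Set X)} :
    IsOmegaCover 𝒰 ↔ (∀ U ∈ 𝒰, IsOpen U) ∧ ∀ F : Set X, F.Finite → ∃ U ∈ 𝒰, F ⊆ U := by
  refine ⟨fun h => ⟨h.1, h.2.2⟩, fun h => ⟨h.1, Set.eq_univ_of_forall fun x => ?_, h.2⟩⟩
  obtain ⟨U, hU, hxU⟩ := h.2 {x} (Set.finite_singleton x)
  exact ⟨U, hU, hxU rfl⟩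

lemma IsOmegaCover.of_refinement {𝒰 𝒱 : Set (Set X)} (h𝒰 : IsOmegaCover 𝒰)
    (hopen : ∀ V ∈ 𝒱, IsOpen V) (href : ∀ U ∈ 𝒰, ∃ V ∈ 𝒱, U ⊆ V) : IsOmegaCover 𝒱 := by
  refine isOmegaCover_iff.2 ⟨hopen, fun F hF => ?_⟩
  obtain ⟨U, hU, hFU⟩ := h𝒰.2.2 F hF
  obtain ⟨V, hV, hUV⟩ := href U hU
  exact ⟨V, hV, hFU.trans hUV⟩

/-- Applying the principle to each shifted sequence `n ↦ 𝒰 (k + n)` gives selections `𝒢 k`;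
stage `n` collects the finitely many choices made from `𝒰 n` by the shifts `k ≤ n`. -/
lemma OmegaMenger.exists_tails_isOmegaCover (h : OmegaMenger X) {𝒰 : ℕ → Set (Set X)}
    (h𝒰 : ∀ n, IsOmegaCover (𝒰 n)) :
    ∃ ℱ : ℕ → Set (Set X), (∀ n, (ℱ n).Finite ∧ ℱ n ⊆ 𝒰 n) ∧
      ∀ N, IsOmegaCover (⋃ n ≥ N, ℱ n) := by
  choose 𝒢 h𝒢 hcover using fun k => h (fun n => 𝒰 (k + n)) fun n => h𝒰 (k + n)
  let ℱ : ℕ → Set (Set X) := fun n => ⋃ k ≤ n, 𝒢 k (n - k)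
  have hsub : ∀ n, ℱ n ⊆ 𝒰 n := fun n => Set.iUnion₂_subset fun k hk => by
    simpa only [Nat.add_sub_cancel' hk] using (h𝒢 k (n - k)).2
  have hmem : ∀ N n, 𝒢 N n ⊆ ℱ (N + n) := fun N n U hU =>
    Set.mem_iUnion₂.2 ⟨N, N.le_add_right n, by rwa [Nat.add_sub_cancel_left]⟩
  refine ⟨ℱ, fun n => ⟨(Set.finite_Iic n).biUnion fun k _ => (h𝒢 k _).1, hsub n⟩, fun N => ?_⟩
  refine (hcover N).of_refinement ?_ fun U hU => ?_
  · intro U hU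
    obtain ⟨n, -, hUn⟩ := Set.mem_iUnion₂.1 hU
    exact (h𝒰 n).1 U (hsub n hUn)
  · obtain ⟨n, hUn⟩ := Set.mem_iUnion.1 hU
    exact ⟨U, Set.mem_iUnion₂.2 ⟨N + n, N.le_add_right n, hmem N n hUn⟩, subset_rfl⟩

lemma CFTat.cdftat {Y : Type*} [TopologicalSpace Y] {y : Y} (h : CFTat Y y) : CDFTat Y y :=
  fun A hA => h A fun n => hA n y

namespace Cp

lemma hasBasis_nhds (f : Cp X) :
    (𝓝 f).HasBasis (fun p : Set X × ℝ => p.1.Finite ∧ 0 < p.2)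
      fun p => {g | ∀ x ∈ p.1, dist (g.1 x) (f.1 x) < p.2} := by
  rw [nhds_subtype_eq_comap]
  exact (hasBasis_nhds_pi_ball f.1).comap Subtype.val

/-- The set of points at which `g` is `ε`-close to `f`. The sets `closeSet f ε g`, `g ∈ A`, turn
a family `A` of functions into a family of open subsets of `X`. -/
def closeSet (f : Cp X) (ε : ℝ) (g : Cp X) : Set X := {x | dist (g.1 x) (f.1 x) < ε}

lemma isOpen_closeSet (f : Cp X) (ε : ℝ) (g : Cp X) : IsOpen (closeSet f ε g) :=
  isOpen_lt (g.2.dist f.2) continuous_const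

lemma closeSet_mono (f : Cp X) {δ ε : ℝ} (h : δ ≤ ε) (g : Cp X) :
    closeSet f δ g ⊆ closeSet f ε g :=
  fun _ hx => lt_of_lt_of_le hx h

lemma mem_closure_iff_isOmegaCover {f : Cp X} {A : Set (Cp X)} :
    f ∈ closure A ↔ ∀ ε > 0, IsOmegaCover (closeSet f ε '' A) := by
  have hopen (ε : ℝ) : ∀ U ∈ closeSet f ε '' A, IsOpen U :=
    Set.forall_mem_image.2 fun g _ => isOpen_closeSet f ε g
  simp only [mem_closure_iff_nhds_basis f.hasBasis_nhds, isOmegaCover_iff,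
    Set.exists_mem_image, Prod.forall]
  exact ⟨fun h ε hε => ⟨hopen ε, fun F hF => h F ε ⟨hF, hε⟩⟩,
    fun h F ε hFε => (h ε hFε.2).2 F hFε.1⟩

end Cp

lemma OmegaMenger.cftat (h : OmegaMenger X) (f : Cp X) : CFTat (Cp X) f := by
  intro A hA
  obtain ⟨ℱ, hℱ, htail⟩ := h.exists_tails_isOmegaCover fun n =>
    Cp.mem_closure_iff_isOmegaCover.1 (hA n) (1 / ((n : ℝ) + 1)) Nat.one_div_pos_of_nat
  have hlift (n : ℕ) : ∃ B ⊆ A n, B.Finite ∧ Cp.closeSet f (1 / ((n : ℝ) + 1)) '' B = ℱ n :=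
    Set.exists_subset_image_finite_and (p := (· = ℱ n)).1 ⟨ℱ n, (hℱ n).2, (hℱ n).1, rfl⟩
  choose B hBA hBfin hBℱ using hlift
  refine ⟨B, fun n => ⟨hBfin n, hBA n⟩, Cp.mem_closure_iff_isOmegaCover.2 fun ε hε => ?_⟩
  obtain ⟨N, hN⟩ := exists_nat_one_div_lt hε
  refine (htail N).of_refinement (Set.forall_mem_image.2 fun g _ => f.isOpen_closeSet ε g) ?_
  intro U hU
  obtain ⟨n, hNn, hUn⟩ := Set.mem_iUnion₂.1 hU
  rw [← hBℱ n] at hUn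
  obtain ⟨g, hg, rfl⟩ := hUn
  exact ⟨f.closeSet ε g, Set.mem_image_of_mem _ (Set.mem_iUnion_of_mem n hg),
    f.closeSet_mono ((Nat.one_div_le_one_div hNn).trans hN.le) g⟩

section CompletelyRegular

variable [CompletelyRegularSpace X]

/-- Urysohn's lemma in the Stone–Čech compactification, where the image of `K` is closed. -/
lemma exists_continuous_zero_one_of_isCompact_of_isOpen {K U : Set X} (hK : IsCompact K)
    (hU : IsOpen U) (hKU : K ⊆ U) :
    ∃ p : C(X, ℝ), Set.EqOn p 0 K ∧ Set.EqOn p 1 Uᶜ := by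
  obtain ⟨V, hV, rfl⟩ := isInducing_stoneCechUnit.isOpen_iff.1 hU
  obtain ⟨q, hq0, hq1, -⟩ := exists_continuous_zero_one_of_isClosed
    (hK.image continuous_stoneCechUnit).isClosed hV.isClosed_compl
    (Set.disjoint_compl_right_iff_subset.2 (Set.image_subset_iff.2 hKU))
  exact ⟨q.comp ⟨stoneCechUnit, continuous_stoneCechUnit⟩,
    fun x hx => hq0 (Set.mem_image_of_mem _ hx), fun x hx => hq1 hx⟩

lemma Cp.exists_eqOn_eqOn_compl (f g : Cp X) {K U : Set X} (hK : IsCompact K) (hU : IsOpen U)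
    (hKU : K ⊆ U) : ∃ φ : Cp X, Set.EqOn φ.1 f.1 K ∧ Set.EqOn φ.1 g.1 Uᶜ := by
  obtain ⟨p, hp0, hp1⟩ := exists_continuous_zero_one_of_isCompact_of_isOpen hK hU hKU
  refine ⟨⟨fun x => (1 - p x) * f.1 x + p x * g.1 x, ?_⟩, fun x hx => ?_, fun x hx => ?_⟩
  · exact ((continuous_const.sub p.continuous).mul f.2).add (p.continuous.mul g.2)
  · simp [hp0 hx]
  · simp [hp1 hx]

lemma IsOmegaCover.dense_setOf_exists_eqOn_compl {𝒰 : Set (Set X)}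
    (h𝒰 : IsOmegaCover 𝒰) (g : Cp X) :
    Dense {φ : Cp X | ∃ U ∈ 𝒰, Set.EqOn φ.1 g.1 Uᶜ} := by
  intro f
  refine (mem_closure_iff_nhds_basis f.hasBasis_nhds).2 fun ⟨F, ε⟩ ⟨hF, hε⟩ => ?_
  obtain ⟨U, hU, hFU⟩ := h𝒰.2.2 F hF
  obtain ⟨φ, hφF, hφU⟩ := f.exists_eqOn_eqOn_compl g hF.isCompact (h𝒰.1 U hU) hFU
  exact ⟨φ, ⟨U, hU, hφU⟩, fun x hx => by rwa [hφF hx, dist_self]⟩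

lemma CDFTat.omegaMenger {f : Cp X} (h : CDFTat (Cp X) f) : OmegaMenger X := by
  intro 𝒰 h𝒰
  let g : Cp X := ⟨fun x => f.1 x + 1, f.2.add continuous_const⟩
  obtain ⟨B, hB, hfB⟩ := h _ fun n => (h𝒰 n).dense_setOf_exists_eqOn_compl g
  have hchoice : ∀ n, ∀ φ ∈ B n, ∃ U ∈ 𝒰 n, Set.EqOn φ.1 g.1 Uᶜ := fun n => (hB n).2
  choose! W hW𝒰 hWg using hchoice
  have hsub : ∀ n, W n '' B n ⊆ 𝒰 n := fun n => Set.image_subset_iff.2 (hW𝒰 n)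
  have hclose : ∀ n, ∀ φ ∈ B n, f.closeSet 1 φ ⊆ W n φ := by
    intro n φ hφ x hx
    by_contra hxW
    simp [Cp.closeSet, hWg n φ hφ hxW, g] at hx
  refine ⟨fun n => W n '' B n, fun n => ⟨(hB n).1.image _, hsub n⟩, ?_⟩
  refine (Cp.mem_closure_iff_isOmegaCover.1 hfB 1 one_pos).of_refinement ?_ ?_
  · intro U hU
    obtain ⟨n, hUn⟩ := Set.mem_iUnion.1 hU
    exact (h𝒰 n).1 U (hsub n hUn)
  · rintro _ ⟨φ, hφ, rfl⟩
    obtain ⟨n, hφn⟩ := Set.mem_iUnion.1 hφ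
    exact ⟨W n φ, Set.mem_iUnion_of_mem n (Set.mem_image_of_mem _ hφn), hclose n φ hφn⟩

end CompletelyRegular

end OmegaCovers

theorem statement3_general (X : Type*) [TopologicalSpace X] [CompletelyRegularSpace X]
    (f : Cp X) : List.TFAE [OmegaMenger X, CFTat (Cp X) f, CDFTat (Cp X) f] := by
  tfae_have 1 → 2 := fun h => h.cftat f
  tfae_have 2 → 3 := CFTat.cdftat
  tfae_have 3 → 1 := CDFTat.omegaMenger
  tfae_finish

/-- For Tychonoff `X`, TFAE: (i) `X` is Ω-Menger;
(ii) `C_p(X)` has countable fan tightness at every point;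
(iii) `C_p(X)` has countable dense fan tightness at every point. -/
theorem statement3 (X : Type*) [TopologicalSpace X] [T35Space X] :
    List.TFAE [OmegaMenger X,
      ∀ f : Cp X, CFTat (Cp X) f,
      ∀ f : Cp X, CDFTat (Cp X) f] := by
  have : Nonempty (Cp X) := ⟨⟨0, continuous_zero⟩⟩
  simpa only [List.map, forall_const] using
    List.forall_tfae [fun _ => OmegaMenger X, CFTat (Cp X), CDFTat (Cp X)] (statement3_general X)
end

section
/- For a regular topological space X, the following are equivalent: (i) X is σ-compact; (ii) Player II has a winning Markov strategy in the ω-Menger game G_fin(Ω_X, Ω_X); (iii) Player II has a winning Markov strategy in the Menger game G_fin(𝒪_X, 𝒪_X). -/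
open TopologicalSpace Cardinal

/-!
A Markov strategy of II in the Menger game determines the sets `K n` of those points that II covers
in round `n` whatever open cover Player I plays. Finitely many members of any open cover of `X`
suffice to cover `K n`, and the `K n` exhaust `X`, since a point outside all of them would let
Player I defeat the strategy. In a regular space the closure of such a set is compact.

Conversely, sets with this finite covering property are stable under products, by the ultrafilter
proof of Tychonoff's theorem. If `𝒰` is an ω-cover, then the powers `U ^ m` of its members cover
`X ^ m`, so in the round coded by `(m, N)` II can select finitely many members of `𝒰` such that
each `m`-tuple of points of `K 0 ∪ ⋯ ∪ K N` lies in one of them; every finite subset of `X` is the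
range of such a tuple.
-/

section

open Set Filter Topology

variable {X : Type*} [TopologicalSpace X] {K : Set X} {𝒰 : Set (Set X)}

section RelativelyCompact

/-- `K` is relatively compact in `X`: finitely many members of any open cover of the whole space
cover `K`. If `X` is not regular, this can be weaker than compactness of `closure K`. -/
def IsRelativelyCompact (K : Set X) : Prop :=
  ∀ 𝒰 ∈ openCovers X, ∃ ℱ ⊆ 𝒰, ℱ.Finite ∧ K ⊆ ⋃₀ ℱ

/-- `X` is σ-relatively compact: a countable union of subsets that are relatively compact in `X`.
It plays the role of σ-compactness in spaces that need not be regular. -/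
def IsSigmaRelativelyCompact (X : Type*) [TopologicalSpace X] : Prop :=
  ∃ K : ℕ → Set X, (∀ n, IsRelativelyCompact (K n)) ∧ ⋃ n, K n = Set.univ

theorem isRelativelyCompact_of_isCompact (hK : IsCompact K) : IsRelativelyCompact K := by
  intro 𝒰 h𝒰
  obtain ⟨ℱ, hℱ𝒰, hℱ, hKℱ⟩ := hK.elim_finite_subcover_image (b := 𝒰) (c := id) h𝒰.1
    (by simpa only [id, ← sUnion_eq_biUnion, h𝒰.2] using subset_univ K)
  exact ⟨ℱ, hℱ𝒰, hℱ, by rwa [sUnion_eq_biUnion]⟩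

theorem IsRelativelyCompact.exists_le_nhds (hK : IsRelativelyCompact K) (f : Ultrafilter X)
    (hf : K ∈ f) : ∃ x, (f : Filter X) ≤ 𝓝 x := by
  by_contra! hlim
  have hcover : {U | IsOpen U ∧ U ∉ f} ∈ openCovers X := by
    refine ⟨fun U hU => hU.1, eq_univ_of_forall fun x => ?_⟩
    obtain ⟨s, hs, hsf⟩ := Filter.not_le.1 (hlim x)
    obtain ⟨U, hUs, hU, hxU⟩ := mem_nhds_iff.1 hs
    exact ⟨U, ⟨hU, fun hUf => hsf (mem_of_superset hUf hUs)⟩, hxU⟩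
  obtain ⟨ℱ, hℱ𝒰, hℱ, hKℱ⟩ := hK _ hcover
  obtain ⟨U, hU, hUf⟩ := (Ultrafilter.finite_sUnion_mem_iff hℱ).1 (mem_of_superset hf hKℱ)
  exact (hℱ𝒰 hU).2 hUf

theorem isRelativelyCompact_of_forall_ultrafilter
    (h : ∀ f : Ultrafilter X, K ∈ f → ∃ x, (f : Filter X) ≤ 𝓝 x) : IsRelativelyCompact K := by
  intro 𝒰 h𝒰
  by_contra! hK
  let l : Filter X := comk (fun s => ∃ ℱ ⊆ 𝒰, ℱ.Finite ∧ s ⊆ ⋃₀ ℱ)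
    ⟨∅, empty_subset _, finite_empty, empty_subset _⟩
    (fun _ ⟨ℱ, hℱ𝒰, hℱ, htℱ⟩ _ hst => ⟨ℱ, hℱ𝒰, hℱ, hst.trans htℱ⟩)
    (fun _ ⟨ℱ, hℱ𝒰, hℱ, hsℱ⟩ _ ⟨𝒢, h𝒢𝒰, h𝒢, ht𝒢⟩ =>
      ⟨ℱ ∪ 𝒢, union_subset hℱ𝒰 h𝒢𝒰, hℱ.union h𝒢,
        by simpa only [sUnion_union] using union_subset_union hsℱ ht𝒢⟩)
  have hl : (l ⊓ 𝓟 K).NeBot := by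
    refine neBot_iff.2 fun hbot => ?_
    obtain ⟨ℱ, hℱ𝒰, hℱ, hKℱ⟩ : Kᶜ ∈ l := by rwa [inf_principal_eq_bot] at hbot
    exact hK ℱ hℱ𝒰 hℱ (by simpa only [compl_compl] using hKℱ)
  let f : Ultrafilter X := Ultrafilter.of (l ⊓ 𝓟 K)
  have hfl : (f : Filter X) ≤ l ⊓ 𝓟 K := Ultrafilter.of_le _
  obtain ⟨x, hx⟩ := h f (le_principal_iff.1 (hfl.trans inf_le_right))
  obtain ⟨U, hU, hxU⟩ : x ∈ ⋃₀ 𝒰 := h𝒰.2 ▸ mem_univ x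
  have hUl : Uᶜ ∈ l := by
    refine ⟨{U}, singleton_subset_iff.2 hU, finite_singleton U, ?_⟩
    rw [compl_compl, sUnion_singleton]
  exact Ultrafilter.compl_mem_iff_notMem.1 (hfl.trans inf_le_left hUl)
    (hx ((h𝒰.1 U hU).mem_nhds hxU))

theorem isRelativelyCompact_biUnion {ι : Type*} {s : Set ι} (hs : s.Finite) {K : ι → Set X}
    (hK : ∀ i ∈ s, IsRelativelyCompact (K i)) : IsRelativelyCompact (⋃ i ∈ s, K i) := by
  refine isRelativelyCompact_of_forall_ultrafilter fun f hf => ?_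
  obtain ⟨i, hi, hif⟩ := (Ultrafilter.finite_biUnion_mem_iff hs).1 hf
  exact (hK i hi).exists_le_nhds f hif

theorem isRelativelyCompact_univ_pi {ι : Type*} {Y : ι → Type*} [∀ i, TopologicalSpace (Y i)]
    {K : ∀ i, Set (Y i)} (hK : ∀ i, IsRelativelyCompact (K i)) :
    IsRelativelyCompact (Set.univ.pi K) := by
  refine isRelativelyCompact_of_forall_ultrafilter fun f hf => ?_
  have hlim (i : ι) : ∃ y : Y i, Tendsto (Function.eval i) (f : Filter (∀ i, Y i)) (𝓝 y) :=
    (hK i).exists_le_nhds (f.map (Function.eval i))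
      (Ultrafilter.mem_map.2 (mem_of_superset hf fun _ hg => hg i trivial))
  choose y hy using hlim
  exact ⟨y, tendsto_pi_nhds.2 hy⟩

theorem IsRelativelyCompact.isCompact_closure [RegularSpace X] (hK : IsRelativelyCompact K) :
    IsCompact (closure K) := by
  refine isCompact_iff_ultrafilter_le_nhds'.2 fun f hf => ?_
  suffices hlim : ∃ x, (f : Filter X) ≤ 𝓝 x by
    obtain ⟨x, hx⟩ := hlim
    exact ⟨x, isClosed_iff_ultrafilter.1 isClosed_closure x f hx hf, hx⟩
  by_contra! hlim
  have hcover : {U | IsOpen U ∧ closure U ∉ f} ∈ openCovers X := by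
    refine ⟨fun U hU => hU.1, eq_univ_of_forall fun x => ?_⟩
    obtain ⟨s, hs, hsf⟩ := Filter.not_le.1 (hlim x)
    obtain ⟨t, ht, htclosed, hts⟩ := exists_mem_nhds_isClosed_subset hs
    have hclosure : closure (interior t) ⊆ s :=
      (closure_minimal interior_subset htclosed).trans hts
    exact ⟨interior t, ⟨isOpen_interior, fun htf => hsf (mem_of_superset htf hclosure)⟩,
      mem_interior_iff_mem_nhds.2 ht⟩
  obtain ⟨ℱ, hℱ𝒰, hℱ, hKℱ⟩ := hK _ hcover
  have hclosure : closure K ⊆ ⋃ U ∈ ℱ, closure U :=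
    hℱ.closure_sUnion ▸ closure_mono hKℱ
  obtain ⟨U, hU, hUf⟩ :=
    (Ultrafilter.finite_biUnion_mem_iff hℱ).1 (mem_of_superset hf hclosure)
  exact (hℱ𝒰 hU).2 hUf

theorem sigmaCompactSpace_iff_isSigmaRelativelyCompact [RegularSpace X] :
    SigmaCompactSpace X ↔ IsSigmaRelativelyCompact X := by
  constructor
  · intro _
    exact ⟨compactCovering X,
      fun n => isRelativelyCompact_of_isCompact (isCompact_compactCovering X n),
      iUnion_compactCovering X⟩
  · rintro ⟨K, hK, hKX⟩
    exact ⟨fun n => closure (K n), fun n => (hK n).isCompact_closure,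
      univ_subset_iff.1 (hKX ▸ iUnion_mono fun n => subset_closure)⟩

end RelativelyCompact

section OmegaCovers

theorem mem_omegaCovers_of_forall_finite (hopen : ∀ U ∈ 𝒰, IsOpen U)
    (hfin : ∀ F : Set X, F.Finite → ∃ U ∈ 𝒰, F ⊆ U) : 𝒰 ∈ omegaCovers X := by
  refine ⟨hopen, eq_univ_of_forall fun x => ?_, hfin⟩
  obtain ⟨U, hU, hxU⟩ := hfin {x} (finite_singleton x)
  exact ⟨U, hU, hxU rfl⟩

theorem IsRelativelyCompact.exists_finite_forall_range_subset (hK : IsRelativelyCompact K)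
    (h𝒰 : 𝒰 ∈ omegaCovers X) (ι : Type*) [Finite ι] :
    ∃ ℱ ⊆ 𝒰, ℱ.Finite ∧ ∀ g : ι → X, (∀ i, g i ∈ K) → ∃ U ∈ ℱ, range g ⊆ U := by
  have hcover : (fun U => Set.univ.pi fun _ : ι => U) '' 𝒰 ∈ openCovers (ι → X) := by
    refine ⟨forall_mem_image.2 fun U hU => isOpen_set_pi finite_univ fun _ _ => h𝒰.1 U hU,
      eq_univ_of_forall fun g => ?_⟩
    obtain ⟨U, hU, hgU⟩ := h𝒰.2.2 (range g) (finite_range g)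
    exact ⟨_, mem_image_of_mem _ hU, fun i _ => hgU (mem_range_self i)⟩
  obtain ⟨ℱ, hℱ𝒰, hℱ, hKℱ⟩ := exists_subset_image_finite_and.1
    (isRelativelyCompact_univ_pi (fun _ : ι => hK) _ hcover)
  refine ⟨ℱ, hℱ𝒰, hℱ, fun g hg => ?_⟩
  obtain ⟨_, ⟨U, hU, rfl⟩, hgU⟩ := hKℱ fun i _ => hg i
  exact ⟨U, hU, range_subset_iff.2 fun i => hgU i trivial⟩

/-- The family of unions of finite subfamilies of `𝒰`, the standard way of turning an open cover
into an ω-cover. -/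
def finiteUnions {α : Type*} (𝒰 : Set (Set α)) : Set (Set α) :=
  {V | ∃ ℱ ⊆ 𝒰, ℱ.Finite ∧ ⋃₀ ℱ = V}

theorem sUnion_mem_finiteUnions {α : Type*} {𝒰 𝒱 : Set (Set α)} (h𝒱 : 𝒱.Finite)
    (h𝒱𝒰 : 𝒱 ⊆ finiteUnions 𝒰) : ⋃₀ 𝒱 ∈ finiteUnions 𝒰 := by
  have hunion (V : Set α) (hV : V ∈ 𝒱) : ∃ ℱ ⊆ 𝒰, ℱ.Finite ∧ ⋃₀ ℱ = V := h𝒱𝒰 hV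
  choose! ℱ hℱ𝒰 hℱ hℱV using hunion
  refine ⟨⋃ V ∈ 𝒱, ℱ V, iUnion₂_subset hℱ𝒰, h𝒱.biUnion hℱ, ?_⟩
  simp only [sUnion_iUnion]
  rw [sUnion_eq_biUnion]
  exact iUnion₂_congr hℱV

theorem finiteUnions_mem_omegaCovers (h𝒰 : 𝒰 ∈ openCovers X) :
    finiteUnions 𝒰 ∈ omegaCovers X := by
  refine mem_omegaCovers_of_forall_finite ?_ fun F hF => ?_
  · rintro _ ⟨ℱ, hℱ𝒰, -, rfl⟩
    exact isOpen_sUnion fun U hU => h𝒰.1 U (hℱ𝒰 hU)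
  · obtain ⟨ℱ, hℱ𝒰, hℱ, hFℱ⟩ := isRelativelyCompact_of_isCompact hF.isCompact 𝒰 h𝒰
    exact ⟨⋃₀ ℱ, ⟨ℱ, hℱ𝒰, hℱ, rfl⟩, hFℱ⟩

end OmegaCovers

section MarkovStrategies

theorem IsSigmaRelativelyCompact.winMarkovFin_omegaCovers (h : IsSigmaRelativelyCompact X) :
    WinMarkovFin (omegaCovers X) (omegaCovers X) := by
  obtain ⟨K, hK, hKX⟩ := h
  have hacc (n : ℕ) : IsRelativelyCompact (accumulate K n) :=
    isRelativelyCompact_biUnion (finite_le_nat n) fun i _ => hK i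
  have hround (𝒰 : Set (Set X)) (h𝒰 : 𝒰 ∈ omegaCovers X) (n : ℕ) :
      ∃ ℱ ⊆ 𝒰, ℱ.Finite ∧ ∀ g : Fin n.unpair.1 → X,
        (∀ i, g i ∈ accumulate K n.unpair.2) → ∃ U ∈ ℱ, range g ⊆ U :=
    (hacc n.unpair.2).exists_finite_forall_range_subset h𝒰 (Fin n.unpair.1)
  choose! σ hσ𝒰 hσfin hσ using hround
  refine ⟨σ, fun 𝒰 h𝒰 n => ⟨hσfin 𝒰 h𝒰 n, hσ𝒰 𝒰 h𝒰 n⟩, fun 𝒰 h𝒰 => ?_⟩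
  refine mem_omegaCovers_of_forall_finite ?_ fun F hF => ?_
  · intro U hU
    obtain ⟨n, hUn⟩ := mem_iUnion.1 hU
    exact (h𝒰 n).1 U (hσ𝒰 _ (h𝒰 n) n hUn)
  · obtain ⟨m, g, -, rfl⟩ := hF.fin_param
    have hgK (i : Fin m) : ∃ k, g i ∈ K k := mem_iUnion.1 (hKX ▸ mem_univ (g i))
    choose k hk using hgK
    obtain ⟨N, hN⟩ := Finite.exists_le k
    have hgU := hσ (𝒰 (Nat.pair m N)) (h𝒰 _) (Nat.pair m N)
    rw [Nat.unpair_pair] at hgU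
    obtain ⟨U, hU, hgU⟩ := hgU g fun i => mem_accumulate.2 ⟨k i, hN i, hk i⟩
    exact ⟨U, mem_iUnion_of_mem _ hU, hgU⟩

theorem winMarkovFin_openCovers_of_omegaCovers
    (h : WinMarkovFin (omegaCovers X) (omegaCovers X)) :
    WinMarkovFin (openCovers X) (openCovers X) := by
  obtain ⟨σ, hσ, hwin⟩ := h
  have hround (𝒰 : Set (Set X)) (h𝒰 : 𝒰 ∈ openCovers X) (n : ℕ) :
      ⋃₀ σ (finiteUnions 𝒰) n ∈ finiteUnions 𝒰 :=
    have hσn := hσ _ (finiteUnions_mem_omegaCovers h𝒰) n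
    sUnion_mem_finiteUnions hσn.1 hσn.2
  choose! τ hτ𝒰 hτfin hτ using hround
  refine ⟨τ, fun 𝒰 h𝒰 n => ⟨hτfin 𝒰 h𝒰 n, hτ𝒰 𝒰 h𝒰 n⟩, fun 𝒰 h𝒰 => ⟨?_, ?_⟩⟩
  · intro U hU
    obtain ⟨n, hUn⟩ := mem_iUnion.1 hU
    exact (h𝒰 n).1 U (hτ𝒰 _ (h𝒰 n) n hUn)
  · calc ⋃₀ ⋃ n, τ (𝒰 n) n = ⋃ n, ⋃₀ τ (𝒰 n) n := sUnion_iUnion _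
      _ = ⋃ n, ⋃₀ σ (finiteUnions (𝒰 n)) n := iUnion_congr fun n => hτ _ (h𝒰 n) n
      _ = ⋃₀ ⋃ n, σ (finiteUnions (𝒰 n)) n := (sUnion_iUnion _).symm
      _ = Set.univ := (hwin _ fun n => finiteUnions_mem_omegaCovers (h𝒰 n)).2.1

theorem isSigmaRelativelyCompact_of_winMarkovFin_openCovers
    (h : WinMarkovFin (openCovers X) (openCovers X)) : IsSigmaRelativelyCompact X := by
  obtain ⟨σ, hσ, hwin⟩ := h
  refine ⟨fun n => ⋂ 𝒰 ∈ openCovers X, ⋃₀ σ 𝒰 n, fun n 𝒰 h𝒰 =>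
    ⟨σ 𝒰 n, (hσ 𝒰 h𝒰 n).2, (hσ 𝒰 h𝒰 n).1, biInter_subset_of_mem h𝒰⟩, ?_⟩
  by_contra hne
  obtain ⟨x, hx⟩ := (ne_univ_iff_exists_notMem _).1 hne
  simp only [mem_iUnion, mem_iInter, not_exists, not_forall] at hx
  choose 𝒰 h𝒰 hx𝒰 using hx
  have hxwin : x ∈ ⋃₀ ⋃ n, σ (𝒰 n) n := (hwin 𝒰 h𝒰).2 ▸ mem_univ x
  rw [sUnion_iUnion, mem_iUnion] at hxwin
  obtain ⟨n, hxn⟩ := hxwin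
  exact hx𝒰 n hxn

end MarkovStrategies

end

theorem statement7_general (X : Type*) [TopologicalSpace X] :
    List.TFAE [IsSigmaRelativelyCompact X,
      WinMarkovFin (omegaCovers X) (omegaCovers X),
      WinMarkovFin (openCovers X) (openCovers X)] := by
  tfae_have 1 → 2 := IsSigmaRelativelyCompact.winMarkovFin_omegaCovers
  tfae_have 2 → 3 := winMarkovFin_openCovers_of_omegaCovers
  tfae_have 3 → 1 := isSigmaRelativelyCompact_of_winMarkovFin_openCovers
  tfae_finish

/-- For regular `X`, TFAE: (i) `X` is σ-compact; (ii) II has a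
winning Markov strategy in `G_fin(Ω_X, Ω_X)`; (iii) II has a winning Markov
strategy in `G_fin(𝒪_X, 𝒪_X)`. -/
theorem statement7 (X : Type*) [TopologicalSpace X] [RegularSpace X] :
    List.TFAE [SigmaCompactSpace X,
      WinMarkovFin (omegaCovers X) (omegaCovers X),
      WinMarkovFin (openCovers X) (openCovers X)] := by
  rw [sigmaCompactSpace_iff_isSigmaRelativelyCompact]
  exact statement7_general X
end

section
/- Player II has a winning strategy in the ω-Menger game G_fin(Ω_{L(ω₁)}, Ω_{L(ω₁)}) on the one-point Lindelöfication L(ω₁) of the discrete space of size ℵ₁. -/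
open TopologicalSpace Cardinal

/-!
Every neighbourhood of `∞` has countable complement, so II only ever has to catch countably many
points missed by each of her own selections. Whenever she selects a set she fixes an exhaustion of
its complement by finite sets, and in round `n` she selects a single member of I's ω-cover that
contains `∞` and the `n`-th term of each of these exhaustions. A point missed by some selection
then lies in all but finitely many of the later ones, so every finite set is contained in some
selection.
-/

open Filter
open scoped Topology

theorem WinStratOne.winStratFin {X : Type*} {𝒜 ℬ : Set (Set X)} (h : WinStratOne 𝒜 ℬ) :
    WinStratFin 𝒜 ℬ := by
  obtain ⟨σ, hσ, hwin⟩ := h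
  refine ⟨fun n s => {σ n s}, fun n s hs =>
    ⟨Set.finite_singleton _, Set.singleton_subset_iff.2 (hσ n s hs)⟩, fun A hA => ?_⟩
  simpa only [Set.iUnion_singleton_eq_range, Set.range, eq_comm] using hwin A hA

/-- The strategy for II in a game `G_1` that remembers only II's own earlier selections: in round
`n`, with earlier selections `u`, it answers `B` by `r n u B`. The earlier selections are
recomputed from I's moves `s`, as `WinStratOne` requires. -/
def ownMovesStrategy {X : Type*} (r : (n : ℕ) → (Fin n → X) → Set X → X) :
    (n : ℕ) → (Fin (n + 1) → Set X) → X
  | n, s => r n (fun i => ownMovesStrategy r i fun j => s (j.castLE (by omega))) (s (Fin.last n))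

theorem winStratOne_of_forall_exists_mem {X : Type*} [Nonempty X] {𝒜 ℬ : Set (Set X)}
    (P : (n : ℕ) → (Fin n → X) → X → Prop)
    (exists_mem : ∀ n u, ∀ B ∈ 𝒜, ∃ x ∈ B, P n u x)
    (range_mem : ∀ A : ℕ → Set X, (∀ n, A n ∈ 𝒜) → ∀ u : ℕ → X,
      (∀ n, u n ∈ A n ∧ P n (fun i => u i) (u n)) → Set.range u ∈ ℬ) :
    WinStratOne 𝒜 ℬ := by
  choose! r hr using exists_mem
  refine ⟨ownMovesStrategy r, fun n s hs => ?_, fun A hA => ?_⟩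
  · rw [ownMovesStrategy]
    exact (hr n _ _ (hs _)).1
  · let u : ℕ → X := fun n => ownMovesStrategy r n fun i => A i
    have u_eq (n : ℕ) : u n = r n (fun i => u i) (A n) := by
      simp only [u]
      rw [ownMovesStrategy]
      rfl
    have range_u : Set.range u ∈ ℬ := range_mem A hA u fun n => by
      rw [u_eq n]
      exact hr n _ _ (hA n)
    simpa only [Set.range, eq_comm] using range_u

theorem eventually_mem_of_finiteExhaustion_subset {X : Type*} {u : ℕ → Set X}
    (E : ∀ i, (u i)ᶜ.FiniteExhaustion) (hE : ∀ n, ∀ i < n, E i n ⊆ u n) (x : X) :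
    ∀ᶠ n in atTop, x ∈ u n := by
  by_cases hx : ∀ n, x ∈ u n
  · exact .of_forall hx
  · push Not at hx
    obtain ⟨i, hi⟩ := hx
    obtain ⟨j, hj⟩ : ∃ j, x ∈ E i j := by
      rwa [← Set.mem_iUnion, (E i).iUnion_eq, Set.mem_compl_iff]
    filter_upwards [eventually_gt_atTop i, eventually_ge_atTop j] with n hin hjn
    exact hE n i hin ((E i).mono hjn hj)

theorem isOmegaCover_range_of_eventually_mem {X : Type*} [TopologicalSpace X] {u : ℕ → Set X}
    (hopen : ∀ n, IsOpen (u n)) (hmem : ∀ x, ∀ᶠ n in atTop, x ∈ u n) :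
    IsOmegaCover (Set.range u) := by
  refine ⟨Set.forall_mem_range.2 hopen, Set.sUnion_eq_univ_iff.2 fun x => ?_, fun F hF => ?_⟩
  · obtain ⟨n, hn⟩ := (hmem x).exists
    exact ⟨u n, Set.mem_range_self n, hn⟩
  · obtain ⟨n, hn⟩ := ((eventually_all_finite hF).2 fun x _ => hmem x).exists
    exact ⟨u n, Set.mem_range_self n, hn⟩

theorem statement8_general {X : Type*} [TopologicalSpace X] {K : Set X} (hK : K.Finite)
    (hnhds : cocountable ≤ 𝓝ˢ K) : WinStratOne (omegaCovers X) (omegaCovers X) := by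
  refine winStratOne_of_forall_exists_mem
    (fun n u U => K ⊆ U ∧ ∀ i, ∀ h : (u i)ᶜ.Countable, h.finiteExhaustion n ⊆ U) ?_ ?_
  · intro n u 𝒰 h𝒰
    have finite_target : (K ∪ ⋃ i, ⋃ h : (u i)ᶜ.Countable, h.finiteExhaustion n).Finite :=
      hK.union <| Set.finite_iUnion fun _ => Set.finite_iUnion fun h => h.finiteExhaustion.finite n
    obtain ⟨U, hU, hsub⟩ := h𝒰.2.2 _ finite_target
    rw [Set.union_subset_iff, Set.iUnion₂_subset_iff] at hsub
    exact ⟨U, hU, hsub⟩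
  · intro 𝒰 h𝒰 u hu
    have isOpen_u (n : ℕ) : IsOpen (u n) := (h𝒰 n).1 _ (hu n).1
    have countable_compl (n : ℕ) : (u n)ᶜ.Countable :=
      mem_cocountable.1 <| hnhds <| (isOpen_u n).mem_nhdsSet.2 (hu n).2.1
    exact isOmegaCover_range_of_eventually_mem isOpen_u <|
      eventually_mem_of_finiteExhaustion_subset (fun i => (countable_compl i).finiteExhaustion)
        fun n i hi => (hu n).2.2 ⟨i, hi⟩ (countable_compl i)

theorem cocountable_le_nhds_lindTop_none (α : Type*) :
    cocountable ≤ @nhds (Option α) (lindTop α) none := by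
  let _ := lindTop α
  intro s hs
  obtain ⟨t, hts, ht, hnone⟩ := mem_nhds_iff.1 hs
  exact mem_of_superset (mem_cocountable.2 (ht hnone)) hts

/-- II has a winning strategy in the ω-Menger game on the one-point
Lindelöfication of the discrete space of size `ℵ₁`. -/
theorem statement8 {α : Type*} (hα : #α = aleph 1) :
    WinStratFin (@omegaCovers (Option α) (lindTop α))
      (@omegaCovers (Option α) (lindTop α)) := by
  let _ := lindTop α
  exact (statement8_general (Set.finite_singleton none)
    ((cocountable_le_nhds_lindTop_none α).trans_eq nhdsSet_singleton.symm)).winStratFin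
end

section
/- For a countable topological space X, Player II has a winning strategy in the selective separability game G_fin(𝒟_X, 𝒟_X) if and only if Player II has a winning Markov strategy in G_fin(𝒟_X, 𝒟_X). -/
open TopologicalSpace Cardinal

/-! Since `X` is countable, II has only countably many possible answers. So after each position we
keep countably many moves of I, enough to provoke every answer II's strategy `σ` would give there;
the resulting subtree of positions is countable, and a Markov strategy can use round `k` to answer
as if the `k`-th position `p k` of the subtree had been reached. Against moves `A 0, A 1, …`, this
covers a whole play of `σ`: at a position `p k` of the subtree, replace `A k` by a kept move
provoking the same answer, and move on to the extended position. Each answer along this play is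
one of the Markov selections. -/

section PositionTree

variable {M : Type*}

/-- The tree of positions of a game with moves in `M`, by length, in which every move after a
position `p : Fin n → M` is confined to the set `C n p`. -/
def positionTree (C : ∀ n, (Fin n → M) → Set M) : ∀ n, Set (Fin n → M)
  | 0 => Set.univ
  | n + 1 => ⋃ p ∈ positionTree C n, Fin.snoc (α := fun _ => M) p '' C n p

theorem snoc_mem_positionTree {C : ∀ n, (Fin n → M) → Set M} {n : ℕ} {p : Fin n → M} {a : M}
    (hp : p ∈ positionTree C n) (ha : a ∈ C n p) :
    Fin.snoc (α := fun _ => M) p a ∈ positionTree C (n + 1) :=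
  Set.mem_biUnion hp (Set.mem_image_of_mem _ ha)

theorem countable_positionTree {C : ∀ n, (Fin n → M) → Set M} (hC : ∀ n p, (C n p).Countable)
    (n : ℕ) : (positionTree C n).Countable := by
  induction n with
  | zero => exact Set.to_countable _
  | succ n ih => exact ih.biUnion fun p _ => (hC n p).image _

theorem snoc_initialSegment (D : ℕ → M) (n : ℕ) :
    Fin.snoc (α := fun _ => M) (fun i : Fin n => D i) (D n) = fun i : Fin (n + 1) => D i :=
  Fin.snoc_init_self (α := fun _ => M) fun i => D i

theorem exists_seq_forall_of_positionTree {C : ∀ n, (Fin n → M) → Set M}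
    {Q : ∀ n, (Fin n → M) → M → Prop}
    (hQ : ∀ n, ∀ p ∈ positionTree C n, ∃ a ∈ C n p, Q n p a) :
    ∃ D : ℕ → M, ∀ n, Q n (fun i => D i) (D n) := by
  choose next next_mem next_spec using hQ
  let extend (n : ℕ) (p : positionTree C n) : positionTree C (n + 1) :=
    ⟨Fin.snoc p.1 (next n p.1 p.2), snoc_mem_positionTree p.2 (next_mem n p.1 p.2)⟩
  let position (n : ℕ) : positionTree C n := Nat.rec ⟨Fin.elim0, Set.mem_univ _⟩ extend n
  let D : ℕ → M := fun n => next n (position n).1 (position n).2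
  have position_eq (n : ℕ) : (position n).1 = fun i : Fin n => D i := by
    induction n with
    | zero => exact Subsingleton.elim _ _
    | succ n ih =>
      calc (position (n + 1)).1
        _ = Fin.snoc (α := fun _ => M) (position n).1 (D n) := rfl
        _ = Fin.snoc (α := fun _ => M) (fun i : Fin n => D i) (D n) := by rw [ih]
        _ = fun i : Fin (n + 1) => D i := snoc_initialSegment D n
  refine ⟨D, fun n => ?_⟩
  rw [← position_eq n]
  exact next_spec n (position n).1 (position n).2

end PositionTree

theorem exists_countable_forall_exists_eq {α β : Type*} {f : α → β}
    (hf : (Set.range f).Countable) : ∃ s : Set α, s.Countable ∧ ∀ a, ∃ b ∈ s, f b = f a := by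
  obtain ⟨s, -, hs⟩ := Set.exists_subset_bijOn Set.univ f
  rw [Set.image_univ] at hs
  exact ⟨s, Set.countable_of_injective_of_countable_image hs.injOn (hs.image_eq ▸ hf),
    fun a => hs.surjOn (Set.mem_range_self a)⟩

theorem exists_markov_simulation {M R : Type*} (σ : ∀ n, (Fin (n + 1) → M) → R)
    (hσ : ∀ n, (Set.range (σ n)).Countable) :
    ∃ τ : M → ℕ → R,
      (∀ a k, ∃ n, ∃ s : Fin (n + 1) → M, s (Fin.last n) = a ∧ σ n s = τ a k) ∧
      ∀ A : ℕ → M, ∃ D : ℕ → M, ∀ n, ∃ k, σ n (fun i => D i) = τ (A k) k := by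
  let answer (n : ℕ) (p : Fin n → M) (a : M) : R := σ n (Fin.snoc p a)
  have countable_range_answer (n : ℕ) (p : Fin n → M) : (Set.range (answer n p)).Countable :=
    (hσ n).mono (Set.range_comp_subset_range _ (σ n))
  choose C C_countable C_spec using fun n p =>
    exists_countable_forall_exists_eq (countable_range_answer n p)
  have : ∀ n, Countable (positionTree C n) := fun n => countable_positionTree C_countable n
  have : Nonempty (Σ n, positionTree C n) := ⟨0, Fin.elim0, Set.mem_univ _⟩
  obtain ⟨p, p_surjective⟩ := exists_surjective_nat (Σ n, positionTree C n)
  refine ⟨fun a k => answer (p k).1 (p k).2 a,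
    fun a k => ⟨(p k).1, Fin.snoc (p k).2.1 a, Fin.snoc_last .., rfl⟩, fun A => ?_⟩
  have exists_move (n : ℕ) (q : Fin n → M) (hq : q ∈ positionTree C n) :
      ∃ a ∈ C n q, ∃ k, answer n q a = answer (p k).1 (p k).2 (A k) := by
    obtain ⟨k, hk⟩ := p_surjective ⟨n, q, hq⟩
    obtain ⟨a, ha, answer_eq⟩ := C_spec n q (A k)
    exact ⟨a, ha, k, by rw [hk, answer_eq]⟩
  obtain ⟨D, hD⟩ := exists_seq_forall_of_positionTree exists_move
  exact ⟨D, fun n => by simpa only [answer, snoc_initialSegment] using hD n⟩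

section SelectionGame

variable {X : Type*} {𝒜 ℬ : Set (Set X)}

theorem WinMarkovFin.winStratFin (h : WinMarkovFin 𝒜 ℬ) : WinStratFin 𝒜 ℬ := by
  obtain ⟨τ, τ_legal, τ_wins⟩ := h
  exact ⟨fun n s => τ (s (Fin.last n)) n, fun n s hs => τ_legal _ (hs _) n, τ_wins⟩

theorem WinStratFin.winMarkovFin [Countable X] (hℬ : IsUpperSet ℬ) (h : WinStratFin 𝒜 ℬ) :
    WinMarkovFin 𝒜 ℬ := by
  obtain ⟨σ, σ_legal, σ_wins⟩ := h
  let response (n : ℕ) (s : Fin (n + 1) → 𝒜) : Set X := σ n fun i => s i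
  have response_legal (n : ℕ) (s : Fin (n + 1) → 𝒜) :
      (response n s).Finite ∧ response n s ⊆ s (Fin.last n) :=
    σ_legal n _ fun i => (s i).2
  have countable_range_response (n : ℕ) : (Set.range (response n)).Countable :=
    Set.Countable.ofPred_finite.mono (Set.range_subset_iff.2 fun s => (response_legal n s).1)
  obtain ⟨τ, τ_eq, τ_simulates⟩ := exists_markov_simulation response countable_range_response
  have τ_legal (A : 𝒜) (k : ℕ) : (τ A k).Finite ∧ τ A k ⊆ A := by
    obtain ⟨n, s, rfl, hs⟩ := τ_eq A k
    exact hs ▸ response_legal n s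
  refine ⟨fun A k => ⋃ hA : A ∈ 𝒜, τ ⟨A, hA⟩ k, fun A hA k => ?_, fun A hA => ?_⟩
  · simpa only [hA, Set.iUnion_true] using τ_legal ⟨A, hA⟩ k
  · simp only [hA, Set.iUnion_true]
    obtain ⟨D, hD⟩ := τ_simulates fun k => ⟨A k, hA k⟩
    refine hℬ (Set.iUnion_subset fun n => ?_) (σ_wins (fun n => D n) fun n => (D n).2)
    obtain ⟨k, answer_eq⟩ := hD n
    exact answer_eq.subset.trans (Set.subset_iUnion (fun k => τ ⟨A k, hA k⟩ k) k)

theorem statement13_general [Countable X] (hℬ : IsUpperSet ℬ) :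
    WinStratFin 𝒜 ℬ ↔ WinMarkovFin 𝒜 ℬ :=
  ⟨WinStratFin.winMarkovFin hℬ, WinMarkovFin.winStratFin⟩

end SelectionGame

theorem isUpperSet_denseFamily (X : Type*) [TopologicalSpace X] : IsUpperSet (denseFamily X) :=
  fun _ _ hst hs => Dense.mono hst hs

/-- for countable `X`, II wins `G_fin(𝒟_X, 𝒟_X)` iff II wins it
with a Markov strategy. -/
theorem statement13 (X : Type*) [TopologicalSpace X] [Countable X] :
    WinStratFin (denseFamily X) (denseFamily X) ↔
      WinMarkovFin (denseFamily X) (denseFamily X) :=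
  statement13_general (isUpperSet_denseFamily X)
end
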